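/- Let I ⊆ ℝ be a nonempty open interval, p ∈ ℝ with p ≤ inf I, and n, k ∈ ℕ∪{0} with 0 ≤ k < n. Then the function φ_{p,n}(u) = (u−p)^n is k-increasing on I but not k-decreasing on I. -/

import Mathlib

open MeasureTheory Set

/-- Integral of `f` over the set `A` with respect to the (automatically bounded) signed
Borel measure `μ`, defined via the Jordan decomposition. -/
noncomputable def sInt (μ : MeasureTheory.SignedMeasure ℝ) (A : Set ℝ) (f : ℝ → ℝ) : ℝ :=
  (∫ t in A, f t ∂μ.toJordanDecomposition.posPart) -
  (∫ t in A, f t ∂μ.toJordanDecomposition.negPart)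

/-- `μ_k(τ) = ∫_{[0,1]} (t-τ)^k dμ(t)` (with the convention `0^0 = 1`). -/
noncomputable def muK (μ : MeasureTheory.SignedMeasure ℝ) (k : ℕ) (τ : ℝ) : ℝ :=
  sInt μ (Icc 0 1) (fun t => (t - τ) ^ k)

/-- `μ_k^-(τ) = ∫_{[0,τ)} (t-τ)^k dμ(t)`. -/
noncomputable def muMinus (μ : MeasureTheory.SignedMeasure ℝ) (k : ℕ) (τ : ℝ) : ℝ :=
  sInt μ (Ico 0 τ) (fun t => (t - τ) ^ k)

/-- `μ_k^+(τ) = ∫_{(τ,1]} (t-τ)^k dμ(t)`. -/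
noncomputable def muPlus (μ : MeasureTheory.SignedMeasure ℝ) (k : ℕ) (τ : ℝ) : ℝ :=
  sInt μ (Ioc τ 1) (fun t => (t - τ) ^ k)

/-- The `n`th-order divided difference of `f` at the points `x 0, …, x n`. -/
noncomputable def divDiff (f : ℝ → ℝ) (n : ℕ) (x : Fin (n + 1) → ℝ) : ℝ :=
  ∑ j : Fin (n + 1), f (x j) / ∏ i ∈ Finset.univ.erase j, (x j - x i)

/-- `f` is `n`-increasing on `I`: all `n`th-order divided differences at pairwise
distinct points of `I` are nonnegative. -/
def nIncreasingOn (f : ℝ → ℝ) (I : Set ℝ) (n : ℕ) : Prop :=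
  ∀ x : Fin (n + 1) → ℝ, Function.Injective x → (∀ j, x j ∈ I) → 0 ≤ divDiff f n x

/-- `f` is `n`-decreasing on `I` if `-f` is `n`-increasing on `I`. -/
def nDecreasingOn (f : ℝ → ℝ) (I : Set ℝ) (n : ℕ) : Prop :=
  nIncreasingOn (fun u => -f u) I n

/-- `φ⁺_{p,n}(u) = ((u-p)_+)^n` for `n ≥ 1`, and `φ⁺_{p,0}` is the characteristic
function of `(p,∞)`. -/
noncomputable def phiPlus (p : ℝ) (n : ℕ) (u : ℝ) : ℝ :=
  if n = 0 then (if p < u then 1 else 0) else (max 0 (u - p)) ^ n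

/-- `φ⁻_{p,n}(u) = ((u-p)_−)^n` for `n ≥ 1`, and `φ⁻_{p,0}` is the characteristic
function of `(−∞,p)`. -/
noncomputable def phiMinus (p : ℝ) (n : ℕ) (u : ℝ) : ℝ :=
  if n = 0 then (if u < p then 1 else 0) else (max 0 (p - u)) ^ n

/- The set `J(p)` associated with an interval `I` and a point `p ∈ ℝ`:
`(−∞, (p − inf I)/(sup I − inf I))` if `p ≤ inf I` (interpreted as `(−∞,0)` when `I` is
unbounded above), `ℝ` if `p ∈ I`, and `(1 + (p − sup I)/(sup I − inf I), ∞)` if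
`p ≥ sup I` (interpreted as `(1,∞)` when `I` is unbounded below). -/
open scoped Classical in
noncomputable def Jset (I : Set ℝ) (p : ℝ) : Set ℝ :=
  if p ∈ I then Set.univ
  else if p ∈ lowerBounds I then
    (if BddAbove I then Set.Iio ((p - sInf I) / (sSup I - sInf I)) else Set.Iio 0)
  else
    (if BddBelow I then Set.Ioi (1 + (p - sSup I) / (sSup I - sInf I)) else Set.Ioi 1)

/-!
Multiplication by `u - a` turns the divided difference over `a, s` into the one over `s`. Writing
`(u - p) ^ (n + 1) = (u - a) * (u - p) ^ n + (a - p) * (u - p) ^ n` therefore gives, with `D` for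
divided differences,
`D[a, s] (u - p) ^ (n + 1) = D[s] (u - p) ^ n + (a - p) * D[a, s] (u - p) ^ n`,
a recursion with nonnegative coefficients when all nodes lie to the right of `p`. Its initial values
are the divided differences of the constant `1`, which are `1` at a single node and `0` otherwise.
With at most `n + 1` nodes, all `> p`, the first summand leads down to a single node `u`, where the
value is a power of `u - p > 0`; hence strict positivity.
-/

section DividedDifference

variable {ι F : Type*} [DecidableEq ι] [Field F]

/-- The divided difference `f[v i : i ∈ s]` at a finite family of nodes, as a linear form in `f`.
Nodes are indexed by a `Finset`, so that one of them can be split off in inductions; the order is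
one less than the number of nodes, and the divided difference over no node at all is `0`. -/
def dividedDifference (s : Finset ι) (v : ι → F) : (F → F) →ₗ[F] F :=
  ∑ i ∈ s, Lagrange.nodalWeight s v i • LinearMap.proj (v i)

theorem dividedDifference_apply (s : Finset ι) (v : ι → F) (f : F → F) :
    dividedDifference s v f = ∑ i ∈ s, Lagrange.nodalWeight s v i * f (v i) := by
  simp [dividedDifference]

@[simp]
theorem dividedDifference_singleton (i : ι) (v : ι → F) (f : F → F) :
    dividedDifference {i} v f = f (v i) := by
  simp [dividedDifference_apply, Lagrange.nodalWeight]

theorem dividedDifference_eval {s : Finset ι} {v : ι → F} (hv : InjOn v s) {P : Polynomial F}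
    (hP : P.degree < s.card) :
    dividedDifference s v (fun u => P.eval u) = P.coeff (s.card - 1) := by
  simp [Lagrange.coeff_eq_sum hv hP, dividedDifference_apply, Lagrange.nodalWeight,
    div_eq_inv_mul]

theorem nodalWeight_insert_mul_sub {s : Finset ι} {a i : ι} {v : ι → F} (ha : a ∉ s)
    (hne : v i ≠ v a) :
    Lagrange.nodalWeight (insert a s) v i * (v i - v a) = Lagrange.nodalWeight s v i := by
  have hai : a ≠ i := by rintro rfl; exact hne rfl
  have ha' : a ∉ s.erase i := mt Finset.mem_of_mem_erase ha
  rw [Lagrange.nodalWeight, Lagrange.nodalWeight, Finset.erase_insert_of_ne hai,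
    Finset.prod_insert ha', mul_right_comm, inv_mul_cancel₀ (sub_ne_zero.2 hne), one_mul]

theorem dividedDifference_insert_sub_mul {s : Finset ι} {a : ι} {v : ι → F} (ha : a ∉ s)
    (hv : InjOn v (insert a s : Finset ι)) (f : F → F) :
    dividedDifference (insert a s) v (fun u => (u - v a) * f u) = dividedDifference s v f := by
  simp only [dividedDifference_apply]
  rw [Finset.sum_insert ha, sub_self, zero_mul, mul_zero, zero_add]
  refine Finset.sum_congr rfl fun i hi => ?_
  have hne : v i ≠ v a := hv.ne (Finset.mem_insert_of_mem hi) (Finset.mem_insert_self a s)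
    (ne_of_mem_of_not_mem hi ha)
  rw [← mul_assoc, nodalWeight_insert_mul_sub ha hne]

theorem dividedDifference_insert_sub_pow_succ {s : Finset ι} {a : ι} {v : ι → F} (ha : a ∉ s)
    (hv : InjOn v (insert a s : Finset ι)) (p : F) (n : ℕ) :
    dividedDifference (insert a s) v (fun u => (u - p) ^ (n + 1)) =
      dividedDifference s v (fun u => (u - p) ^ n) +
        (v a - p) * dividedDifference (insert a s) v (fun u => (u - p) ^ n) := by
  have hsplit : (fun u => (u - p) ^ (n + 1)) =
      (fun u => (u - v a) * (u - p) ^ n) + (v a - p) • fun u => (u - p) ^ n := by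
    ext u
    simp only [Pi.add_apply, Pi.smul_apply, smul_eq_mul]
    ring
  rw [hsplit, map_add, map_smul, smul_eq_mul, dividedDifference_insert_sub_mul ha hv]

section Order

variable [LinearOrder F] [IsStrictOrderedRing F]

theorem dividedDifference_one_nonneg {s : Finset ι} {v : ι → F} (hv : InjOn v s) :
    0 ≤ dividedDifference s v (fun _ => 1) := by
  rcases s.eq_empty_or_nonempty with rfl | hs
  · simp [dividedDifference_apply]
  · have hdeg : (1 : Polynomial F).degree < s.card := by
      rw [Polynomial.degree_one]
      exact_mod_cast hs.card_pos
    have hcoeff := dividedDifference_eval hv hdeg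
    simp only [Polynomial.eval_one, Polynomial.coeff_one] at hcoeff
    rw [hcoeff]
    split_ifs <;> simp

theorem dividedDifference_sub_pow_nonneg {s : Finset ι} {v : ι → F} {p : F} (hv : InjOn v s)
    (hp : ∀ i ∈ s, p ≤ v i) (n : ℕ) : 0 ≤ dividedDifference s v (fun u => (u - p) ^ n) := by
  induction s using Finset.induction_on generalizing n with
  | empty => simp [dividedDifference_apply]
  | insert a s ha ih =>
    have hvs : InjOn v s := hv.mono (Finset.coe_subset.2 (Finset.subset_insert a s))
    obtain ⟨hpa, hps⟩ := Finset.forall_mem_insert _ _ _ |>.1 hp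
    induction n with
    | zero => simpa only [pow_zero] using dividedDifference_one_nonneg hv
    | succ n ihn =>
      rw [dividedDifference_insert_sub_pow_succ ha hv]
      exact add_nonneg (ih hvs hps n) (mul_nonneg (sub_nonneg.2 hpa) ihn)

theorem dividedDifference_sub_pow_pos {s : Finset ι} {v : ι → F} {p : F} (hs : s.Nonempty)
    (hv : InjOn v s) (hp : ∀ i ∈ s, p < v i) {n : ℕ} (hn : s.card ≤ n + 1) :
    0 < dividedDifference s v (fun u => (u - p) ^ n) := by
  induction hs using Finset.Nonempty.cons_induction generalizing n with
  | singleton a => simpa using pow_pos (sub_pos.2 (hp a (Finset.mem_singleton_self a))) n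
  | cons a s ha hs ih =>
    rw [Finset.card_cons] at hn
    rw [Finset.cons_eq_insert] at hv hp ⊢
    have hvs : InjOn v s := hv.mono (Finset.coe_subset.2 (Finset.subset_insert a s))
    obtain ⟨hpa, hps⟩ := Finset.forall_mem_insert _ _ _ |>.1 hp
    obtain ⟨m, rfl⟩ : ∃ m, n = m + 1 :=
      Nat.exists_eq_add_one.2 (hs.card_pos.trans_le (Nat.le_of_succ_le_succ hn))
    have hnonneg := dividedDifference_sub_pow_nonneg hv (fun i hi => (hp i hi).le) m
    rw [dividedDifference_insert_sub_pow_succ ha hv]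
    exact add_pos_of_pos_of_nonneg (ih hvs hps (Nat.le_of_succ_le_succ hn))
      (mul_nonneg (sub_nonneg.2 hpa.le) hnonneg)

end Order

end DividedDifference

theorem divDiff_eq_dividedDifference (f : ℝ → ℝ) (k : ℕ) (x : Fin (k + 1) → ℝ) :
    divDiff f k x = dividedDifference Finset.univ x f := by
  simp [divDiff, dividedDifference_apply, Lagrange.nodalWeight, div_eq_inv_mul]

theorem divDiff_neg (f : ℝ → ℝ) (k : ℕ) (x : Fin (k + 1) → ℝ) :
    divDiff (fun u => -f u) k x = -divDiff f k x := by
  simp only [divDiff_eq_dividedDifference]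
  exact map_neg (dividedDifference Finset.univ x) f

theorem nIncreasingOn_sub_pow {I : Set ℝ} {p : ℝ} (hp : p ∈ lowerBounds I) (n k : ℕ) :
    nIncreasingOn (fun u => (u - p) ^ n) I k := by
  intro x hx hxI
  rw [divDiff_eq_dividedDifference]
  exact dividedDifference_sub_pow_nonneg hx.injOn (fun j _ => hp (hxI j)) n

theorem not_nDecreasingOn_sub_pow {I : Set ℝ} (hI : I.Infinite) {p : ℝ} (hp : p ∈ lowerBounds I)
    {n k : ℕ} (hkn : k ≤ n) : ¬ nDecreasingOn (fun u => (u - p) ^ n) I k := by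
  intro hdec
  have hIp : (I \ {p}).Infinite := hI.sdiff (finite_singleton p)
  let e : Fin (k + 1) ↪ ↥(I \ {p}) := Fin.valEmbedding.trans (hIp.natEmbedding _)
  let x : Fin (k + 1) → ℝ := fun j => e j
  have hx : Function.Injective x := Subtype.val_injective.comp e.injective
  have hpx (j) : p < x j := lt_of_le_of_ne (hp (e j).2.1) (Ne.symm (e j).2.2)
  have hpos : 0 < divDiff (fun u => (u - p) ^ n) k x := by
    rw [divDiff_eq_dividedDifference]
    exact dividedDifference_sub_pow_pos Finset.univ_nonempty hx.injOn (fun j _ => hpx j)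
      (by simpa using hkn)
  have hneg : 0 ≤ divDiff (fun u => -(u - p) ^ n) k x := hdec x hx fun j => (e j).2.1
  rw [divDiff_neg] at hneg
  linarith

theorem stmt8_general {I : Set ℝ} (hI : I.Infinite) {p : ℝ} (hp : p ∈ lowerBounds I) {n k : ℕ}
    (hkn : k ≤ n) :
    nIncreasingOn (fun u => (u - p) ^ n) I k ∧ ¬ nDecreasingOn (fun u => (u - p) ^ n) I k :=
  ⟨nIncreasingOn_sub_pow hp n k, not_nDecreasingOn_sub_pow hI hp hkn⟩

theorem stmt8 (I : Set ℝ) (hIo : IsOpen I) (hIc : I.OrdConnected) (hIne : I.Nonempty)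
    (p : ℝ) (hp : p ∈ lowerBounds I) (n k : ℕ) (hkn : k < n) :
    nIncreasingOn (fun u => (u - p) ^ n) I k ∧
      ¬ nDecreasingOn (fun u => (u - p) ^ n) I k := by
  obtain ⟨a, ha⟩ := hIne
  exact stmt8_general (infinite_of_mem_nhds a (hIo.mem_nhds ha)) hp hkn.le
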